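/- Let (Ω, F, P) be a probability space with a discrete-time filtration (F_i)_{i∈ℕ}, let k ≥ 1 and N ≥ 1 be integers, let I ⊆ {1, …, N}, and let (v_i)_{i∈I} be real square-integrable random variables such that, for each i ∈ I, v_i is F_{i+k}-measurable and E( v_i | F_i ) = 0 almost surely. Then E( ( Σ_{i∈I} v_i )² ) ≤ 2k · Σ_{i∈I} E( v_i² ). -/

import Mathlib

open MeasureTheory

/-!
Expand the second moment into the cross moments `E⟪v_i, v_j⟫`. If `i + k ≤ j`, then `v_i` is
`F_j`-measurable and can be pulled out of `E(⟪v_i, v_j⟫ | F_j)`, so the cross moment vanishes. Each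
of the others is at most `(E‖v_i‖² + E‖v_j‖²) / 2`, and each index has at most `2k - 1` indices at
distance less than `k`, itself included.
-/

section SparseSums

variable {R ι : Type*} [CommRing R] [LinearOrder R] [IsStrictOrderedRing R]

theorem sum_sum_le_mul_sum_of_card_filter_le (s : Finset ι) (r : ι → ι → Prop) [DecidableRel r]
    (hr : ∀ i j, r i j ↔ r j i) {d : ℕ} (hd : ∀ i ∈ s, (s.filter (r i)).card ≤ d) {a : ι → R}
    (ha : ∀ i ∈ s, 0 ≤ a i) {c : ι → ι → R}
    (hnear : ∀ i ∈ s, ∀ j ∈ s, r i j → 2 * c i j ≤ a i + a j)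
    (hfar : ∀ i ∈ s, ∀ j ∈ s, ¬ r i j → c i j ≤ 0) :
    ∑ i ∈ s, ∑ j ∈ s, c i j ≤ d * ∑ i ∈ s, a i := by
  have hentry : ∀ i ∈ s, ∀ j ∈ s,
      2 * c i j ≤ (if r i j then a i else 0) + (if r i j then a j else 0) := by
    intro i hi j hj
    split_ifs with hij
    · exact hnear i hi j hj hij
    · linarith [hfar i hi j hj hij]
  have hrow : ∑ i ∈ s, ∑ j ∈ s, (if r i j then a i else 0) ≤ d * ∑ i ∈ s, a i := by
    rw [Finset.mul_sum]
    refine Finset.sum_le_sum fun i hi ↦ ?_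
    rw [← Finset.sum_filter, Finset.sum_const, nsmul_eq_mul]
    exact mul_le_mul_of_nonneg_right (by exact_mod_cast hd i hi) (ha i hi)
  have hcol : ∑ i ∈ s, ∑ j ∈ s, (if r i j then a j else 0)
      = ∑ i ∈ s, ∑ j ∈ s, (if r i j then a i else 0) := by
    rw [Finset.sum_comm]
    simp only [hr]
  have hsum := Finset.sum_le_sum fun i hi ↦ Finset.sum_le_sum (hentry i hi)
  simp only [Finset.sum_add_distrib, ← Finset.mul_sum] at hsum
  linarith

end SparseSums

theorem card_filter_lt_add_and_lt_add_le (s : Finset ℕ) (k i : ℕ) :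
    (s.filter fun j ↦ i < j + k ∧ j < i + k).card ≤ 2 * k - 1 := by
  calc (s.filter fun j ↦ i < j + k ∧ j < i + k).card
      ≤ (Finset.Ico (i + 1 - k) (i + k)).card := by
        refine Finset.card_le_card fun j hj ↦ ?_
        simp only [Finset.mem_filter, Finset.mem_Ico] at hj ⊢
        omega
    _ ≤ 2 * k - 1 := by
        rw [Nat.card_Ico]
        omega

section SquareIntegrable

variable {Ω ι E : Type*} {m0 : MeasurableSpace Ω} {μ : Measure Ω} [NormedAddCommGroup E]
  [InnerProductSpace ℝ E]

theorem integrable_inner_of_memLp_two {f g : Ω → E} (hf : MemLp f 2 μ) (hg : MemLp g 2 μ) :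
    Integrable (fun ω ↦ inner ℝ (f ω) (g ω)) μ :=
  (hf.norm.integrable_mul hg.norm).mono
    (hf.aestronglyMeasurable.inner hg.aestronglyMeasurable)
    (ae_of_all μ fun ω ↦ by simpa using norm_inner_le_norm (𝕜 := ℝ) (f ω) (g ω))

theorem two_mul_integral_inner_le {f g : Ω → E} (hf : MemLp f 2 μ) (hg : MemLp g 2 μ) :
    2 * ∫ ω, inner ℝ (f ω) (g ω) ∂μ ≤ ∫ ω, ‖f ω‖ ^ 2 ∂μ + ∫ ω, ‖g ω‖ ^ 2 ∂μ := by
  have hf2 := hf.integrable_norm_pow two_ne_zero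
  have hg2 := hg.integrable_norm_pow two_ne_zero
  rw [← integral_const_mul, ← integral_add hf2 hg2]
  refine integral_mono ((integrable_inner_of_memLp_two hf hg).const_mul 2) (hf2.add hg2) fun ω ↦ ?_
  linarith [norm_sub_sq_real (f ω) (g ω), sq_nonneg ‖f ω - g ω‖]

theorem integral_norm_sum_sq {s : Finset ι} {v : ι → Ω → E} (hv : ∀ i ∈ s, MemLp (v i) 2 μ) :
    ∫ ω, ‖∑ i ∈ s, v i ω‖ ^ 2 ∂μ = ∑ i ∈ s, ∑ j ∈ s, ∫ ω, inner ℝ (v i ω) (v j ω) ∂μ := by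
  have hint : ∀ i ∈ s, ∀ j ∈ s, Integrable (fun ω ↦ inner ℝ (v i ω) (v j ω)) μ :=
    fun i hi j hj ↦ integrable_inner_of_memLp_two (hv i hi) (hv j hj)
  simp only [← real_inner_self_eq_norm_sq, sum_inner]
  simp only [inner_sum]
  rw [integral_finsetSum s fun i hi ↦ integrable_finsetSum s (hint i hi)]
  exact Finset.sum_congr rfl fun i hi ↦ integral_finsetSum s (hint i hi)

theorem integral_inner_eq_zero_of_condExp_eq_zero [CompleteSpace E] {m : MeasurableSpace Ω}
    (hm : m ≤ m0) [SigmaFinite (μ.trim hm)] {f g : Ω → E} (hfm : AEStronglyMeasurable[m] f μ)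
    (hfg : Integrable (fun ω ↦ inner ℝ (f ω) (g ω)) μ) (hg : Integrable g μ)
    (hcond : μ[g | m] =ᵐ[μ] 0) :
    ∫ ω, inner ℝ (f ω) (g ω) ∂μ = 0 := by
  have hpull : μ[fun ω ↦ inner ℝ (f ω) (g ω) | m] =ᵐ[μ] fun ω ↦ inner ℝ (f ω) (μ[g | m] ω) :=
    condExp_bilin_of_aestronglyMeasurable_left (innerSL ℝ) hfm hfg hg
  have hzero : μ[fun ω ↦ inner ℝ (f ω) (g ω) | m] =ᵐ[μ] 0 := by
    filter_upwards [hpull, hcond] with ω hω hω0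
    rw [hω, hω0, Pi.zero_apply, inner_zero_right, Pi.zero_apply]
  rw [← integral_condExp hm, integral_congr_ae hzero, Pi.zero_def, integral_zero]

end SquareIntegrable

theorem stmt16_general {Ω E : Type*} {m0 : MeasurableSpace Ω} {μ : Measure Ω}
    [NormedAddCommGroup E] [InnerProductSpace ℝ E] [CompleteSpace E] (F : Filtration ℕ m0)
    [SigmaFiniteFiltration μ F] (k : ℕ) (I : Finset ℕ) {v : ℕ → Ω → E}
    (hmeas : ∀ i ∈ I, AEStronglyMeasurable[F (i + k)] (v i) μ)
    (hL1 : ∀ i ∈ I, Integrable (v i) μ) (hL2 : ∀ i ∈ I, MemLp (v i) 2 μ)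
    (hcond : ∀ i ∈ I, μ[v i | F i] =ᵐ[μ] 0) :
    ∫ ω, ‖∑ i ∈ I, v i ω‖ ^ 2 ∂μ ≤ (2 * k - 1 : ℕ) * ∑ i ∈ I, ∫ ω, ‖v i ω‖ ^ 2 ∂μ := by
  have horth : ∀ i ∈ I, ∀ j ∈ I, i + k ≤ j → ∫ ω, inner ℝ (v i ω) (v j ω) ∂μ = 0 :=
    fun i hi j hj hij ↦ integral_inner_eq_zero_of_condExp_eq_zero (F.le j)
      ((hmeas i hi).mono (F.mono hij)) (integrable_inner_of_memLp_two (hL2 i hi) (hL2 j hj))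
      (hL1 j hj) (hcond j hj)
  rw [integral_norm_sum_sq hL2]
  refine sum_sum_le_mul_sum_of_card_filter_le I (fun i j ↦ i < j + k ∧ j < i + k)
    (fun _ _ ↦ and_comm) (fun i _ ↦ card_filter_lt_add_and_lt_add_le I k i)
    (fun i _ ↦ integral_nonneg fun ω ↦ sq_nonneg ‖v i ω‖)
    (fun i hi j hj _ ↦ two_mul_integral_inner_le (hL2 i hi) (hL2 j hj)) fun i hi j hj hij ↦ ?_
  rcases (by omega : i + k ≤ j ∨ j + k ≤ i) with hle | hle
  · exact (horth i hi j hj hle).le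
  · simpa only [real_inner_comm] using (horth j hj i hi hle).le

/-- Second-moment bound for sums of `k`-dependent martingale-difference-type blocks:
if each `v_i` is square-integrable, `F_{i+k}`-measurable, and `E(v_i | F_i) = 0`, then
`E( (Σ_{i∈I} v_i)² ) ≤ 2k Σ_{i∈I} E(v_i²)`. -/
theorem stmt16 {Ω : Type*} {m0 : MeasurableSpace Ω} (μ : Measure Ω) [IsProbabilityMeasure μ]
    (F : Filtration ℕ m0) (k N : ℕ) (hk : 1 ≤ k) (hN : 1 ≤ N)
    (I : Finset ℕ) (hI : I ⊆ Finset.Icc 1 N)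
    (v : ℕ → Ω → ℝ)
    (hmeas : ∀ i ∈ I, StronglyMeasurable[F (i + k)] (v i))
    (hL2 : ∀ i ∈ I, MemLp (v i) 2 μ)
    (hcond : ∀ i ∈ I, μ[v i | F i] =ᵐ[μ] 0) :
    ∫ ω, (∑ i ∈ I, v i ω) ^ 2 ∂μ ≤ 2 * k * ∑ i ∈ I, ∫ ω, (v i ω) ^ 2 ∂μ := by
  calc ∫ ω, (∑ i ∈ I, v i ω) ^ 2 ∂μ
      ≤ (2 * k - 1 : ℕ) * ∑ i ∈ I, ∫ ω, (v i ω) ^ 2 ∂μ := by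
        simpa only [Real.norm_eq_abs, sq_abs] using
          stmt16_general F k I (fun i hi ↦ (hmeas i hi).aestronglyMeasurable)
            (fun i hi ↦ (hL2 i hi).integrable one_le_two) hL2 hcond
    _ ≤ 2 * k * ∑ i ∈ I, ∫ ω, (v i ω) ^ 2 ∂μ := by
        gcongr
        exact_mod_cast Nat.sub_le (2 * k) 1
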